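/- Let p ∈ (1,∞). There exists a constant C_p > 0 such that for all n ∈ ℕ and all shifts σ ∈ {0,1}^n, the L_p-discrepancy of the multiset ~R_{n,σ}^{sym} with N = 2^{n+1} points (counted with multiplicity) satisfies L_{p,N}(~R_{n,σ}^{sym}) ≤ C_p · √(log N)/N, independently of σ. -/

import Mathlib

open MeasureTheory

/-- The real value of a binary digit. -/
noncomputable def bval (b : Bool) : ℝ := if b then 1 else 0

/-- The two-dimensional digit shifted Hammersley point set with `2^n` points,
indexed by the digit vectors `t : Fin n → Bool`.  The index `i : Fin n`
corresponds to the digit `t_{i+1}` of the paper. -/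
noncomputable def hammersleyShifted (n : ℕ) (σ : Fin n → Bool) (t : Fin n → Bool) : ℝ × ℝ :=
  (∑ i : Fin n, bval (t i) / 2 ^ (n - i.val),
   ∑ i : Fin n, bval (t i != σ i) / 2 ^ (i.val + 1))

/-- Number of points of the (indexed) point set `P` lying in `[0,t₁) × [0,t₂)`. -/
noncomputable def countIn {ι : Type*} [Fintype ι] (P : ι → ℝ × ℝ) (t : ℝ × ℝ) : ℕ :=
  (Finset.univ.filter
    (fun k => 0 ≤ (P k).1 ∧ (P k).1 < t.1 ∧ 0 ≤ (P k).2 ∧ (P k).2 < t.2)).card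

/-- The local discrepancy `D_N(P,t) = A_N([0,t),P)/N - t₁t₂` of an indexed point set. -/
noncomputable def localDisc {ι : Type*} [Fintype ι] (P : ι → ℝ × ℝ) (t : ℝ × ℝ) : ℝ :=
  (countIn P t : ℝ) / (Fintype.card ι) - t.1 * t.2

/-- The `L_p`-discrepancy of an indexed point set. -/
noncomputable def LpDisc (p : ℝ) {ι : Type*} [Fintype ι] (P : ι → ℝ × ℝ) : ℝ :=
  (∫ t in Set.Icc (0 : ℝ × ℝ) 1, |localDisc P t| ^ p) ^ (1 / p)

/-- One-dimensional `L∞`-normalized Haar function `h_{j,m}`, with `j ∈ ℤ`, `j = -1`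
giving the indicator of `[0,1)` and `j ≥ 0` the usual Haar function on `I_{j,m}`. -/
noncomputable def haar1 (j : ℤ) (m : ℕ) (x : ℝ) : ℝ :=
  if j = -1 then (if 0 ≤ x ∧ x < 1 then 1 else 0)
  else if (2 * m : ℝ) / 2 ^ (j.toNat + 1) ≤ x ∧ x < (2 * m + 1 : ℝ) / 2 ^ (j.toNat + 1) then 1
  else if (2 * m + 1 : ℝ) / 2 ^ (j.toNat + 1) ≤ x ∧ x < (2 * m + 2 : ℝ) / 2 ^ (j.toNat + 1) then -1
  else 0

/-- Two-dimensional (tensor product) Haar function. -/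
noncomputable def haar2 (j : ℤ × ℤ) (m : ℕ × ℕ) (x : ℝ × ℝ) : ℝ :=
  haar1 j.1 m.1 x.1 * haar1 j.2 m.2 x.2

/-- One-dimensional dyadic interval `I_{j,m}` (with `I_{-1,0} = [0,1)`). -/
noncomputable def dyadicI (j : ℤ) (m : ℕ) : Set ℝ :=
  if j = -1 then Set.Ico (0 : ℝ) 1
  else Set.Ico ((m : ℝ) / 2 ^ j.toNat) ((m + 1 : ℝ) / 2 ^ j.toNat)

/-- Haar coefficient `μ_{j,m} = ∫_{[0,1]²} D_N(P,t) h_{j,m}(t) dt` of the local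
discrepancy of an indexed point set. -/
noncomputable def haarCoeff {ι : Type*} [Fintype ι] (P : ι → ℝ × ℝ) (j : ℤ × ℤ) (m : ℕ × ℕ) : ℝ :=
  ∫ t in Set.Icc (0 : ℝ × ℝ) 1, localDisc P t * haar2 j m t

/-- Number of zero components of the shift `σ`. -/
noncomputable def zeroCount {n : ℕ} (σ : Fin n → Bool) : ℕ :=
  (Finset.univ.filter (fun j => σ j = false)).card

/-- The symmetrized digit shifted Hammersley point set `R_{n,σ} ∪ R_{n,σ⊕1}`
with `2^(n+1)` points, indexed by `Bool × (Fin n → Bool)`. -/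
noncomputable def hammersleySym (n : ℕ) (σ : Fin n → Bool) :
    Bool × (Fin n → Bool) → ℝ × ℝ :=
  fun bt => if bt.1 then hammersleyShifted n (fun i => !(σ i)) bt.2
            else hammersleyShifted n σ bt.2

/-- The multiset `R_{n,σ} ∪ {(x, 1-y) : (x,y) ∈ R_{n,σ}}` with `2^(n+1)` points
(counted with multiplicity), indexed by `Bool × (Fin n → Bool)`. -/
noncomputable def hammersleySymTilde (n : ℕ) (σ : Fin n → Bool) :
    Bool × (Fin n → Bool) → ℝ × ℝ :=
  fun bt => if bt.1 then ((hammersleyShifted n σ bt.2).1, 1 - (hammersleyShifted n σ bt.2).2)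
            else hammersleyShifted n σ bt.2

/-!
Split the unit square into `4 ^ n` dyadic cells, indexed by the digits `a`, `b` of their column
and row. Reflecting the second coordinate complements the shift, so on each cell `N` times the
local discrepancy is, up to a bounded error, the sum of the discrepancies of the sets shifted by
`σ` and by `σᶜ`, both taken at the midline of the row of the cell. The means of these two terms
are opposite and cancel. After centring, appending one digit to `a` and to `b` moves each term by
at most `1 / 2`, equally often upwards and downwards, so `cosh x ≤ exp (x ^ 2 / 2)` shows by
induction on `n` that each term is subgaussian over the cells, with variance proxy `n / 4`.
Bounding `|x| ^ p` by an exponential moment with parameter of order `1 / √n` gives the `L_p` norm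
`O(√n / N)`.
-/

/-- The integer `∑ i, tᵢ 2ⁱ`, as a bijection: `littleEndian t / 2 ^ n` is the abscissa of the
Hammersley point with digit vector `t`. -/
def littleEndian {n : ℕ} : (Fin n → Bool) ≃ Fin (2 ^ n) :=
  ((Equiv.refl (Fin n)).arrowCongr finTwoEquiv.symm).trans finFunctionFinEquiv

/-- The integer `∑ i, tᵢ 2ⁿ⁻¹⁻ⁱ`, as a bijection: `bigEndian (digitXor t σ) / 2 ^ n` is the ordinate
of the Hammersley point with digit vector `t` and shift `σ`. -/
def bigEndian {n : ℕ} : (Fin n → Bool) ≃ Fin (2 ^ n) :=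
  (Fin.revPerm.arrowCongr (Equiv.refl Bool)).trans littleEndian

/-- The digitwise sum `t ⊕ σ` modulo `2`. -/
def digitXor {n : ℕ} (t σ : Fin n → Bool) : Fin n → Bool := fun i => t i != σ i

lemma littleEndian_eq_sum {n : ℕ} (t : Fin n → Bool) :
    (littleEndian t : ℕ) = ∑ i, (t i).toNat * 2 ^ (i : ℕ) := by
  refine (finFunctionFinEquiv_apply _).trans (Finset.sum_congr rfl fun i _ => ?_)
  cases h : t i <;> simp [h, finTwoEquiv]

lemma bigEndian_eq_littleEndian_rev {n : ℕ} (t : Fin n → Bool) :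
    bigEndian t = littleEndian (t ∘ Fin.rev) := rfl

lemma littleEndian_snoc {n : ℕ} (t : Fin n → Bool) (u : Bool) :
    (littleEndian (Fin.snoc t u) : ℕ) = littleEndian t + u.toNat * 2 ^ n := by
  simp [littleEndian_eq_sum, Fin.sum_univ_castSucc]

lemma bigEndian_snoc {n : ℕ} (t : Fin n → Bool) (u : Bool) :
    (bigEndian (Fin.snoc t u) : ℕ) = 2 * bigEndian t + u.toNat := by
  rw [bigEndian_eq_littleEndian_rev, bigEndian_eq_littleEndian_rev, Fin.snoc_comp_rev]
  simp only [littleEndian_eq_sum, Fin.sum_univ_succ, Fin.cons_zero, Fin.cons_succ, Fin.val_zero,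
    Fin.val_succ, pow_zero, mul_one, pow_succ, Finset.mul_sum]
  rw [add_comm]
  congr! 2 with i
  ring

lemma digitXor_snoc {n : ℕ} (t σ : Fin n → Bool) (u s : Bool) :
    digitXor (Fin.snoc t u : Fin (n + 1) → Bool) (Fin.snoc σ s)
      = Fin.snoc (digitXor t σ) (u != s) := by
  funext i
  refine Fin.lastCases ?_ (fun i => ?_) i <;> simp [digitXor]

lemma digitXor_involutive {n : ℕ} (σ : Fin n → Bool) :
    Function.Involutive (digitXor · σ) := by
  intro t
  funext i
  simp [digitXor]

lemma digitXor_compl {n : ℕ} (t σ : Fin n → Bool) : digitXor t σᶜ = (digitXor t σ)ᶜ := by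
  funext i
  simp [digitXor]

lemma bigEndian_add_bigEndian_compl {n : ℕ} (t : Fin n → Bool) :
    (bigEndian t : ℕ) + bigEndian tᶜ + 1 = 2 ^ n := by
  induction t using Fin.snocInduction with
  | elim0 => simp
  | snoc t u ih =>
    have : (Fin.snoc t u : Fin (_ + 1) → Bool)ᶜ = Fin.snoc tᶜ (!u) := by
      funext i
      refine Fin.lastCases ?_ (fun i => ?_) i <;> simp
    rw [this, bigEndian_snoc, bigEndian_snoc, pow_succ]
    cases u <;> simp <;> omega

lemma bval_eq_toNat (b : Bool) : bval b = b.toNat := by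
  cases b <;> simp [bval]

lemma sum_bval_div_eq_littleEndian {n : ℕ} (t : Fin n → Bool) :
    ∑ i, bval (t i) / 2 ^ (n - i.val) = (littleEndian t : ℝ) / 2 ^ n := by
  simp only [littleEndian_eq_sum, Nat.cast_sum, Finset.sum_div]
  refine Finset.sum_congr rfl fun i _ => ?_
  rw [bval_eq_toNat, pow_sub₀ _ two_ne_zero i.is_le']
  push_cast
  field_simp

lemma sum_bval_div_eq_bigEndian {n : ℕ} (t : Fin n → Bool) :
    ∑ i, bval (t i) / 2 ^ (i.val + 1) = (bigEndian t : ℝ) / 2 ^ n := by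
  rw [bigEndian_eq_littleEndian_rev, ← sum_bval_div_eq_littleEndian, ← Equiv.sum_comp Fin.revPerm]
  refine Finset.sum_congr rfl fun i _ => ?_
  have : n - i.val = i.rev.val + 1 := by grind
  simp [this]

lemma hammersleyShifted_eq {n : ℕ} (σ t : Fin n → Bool) :
    hammersleyShifted n σ t
      = ((littleEndian t : ℝ) / 2 ^ n, (bigEndian (digitXor t σ) : ℝ) / 2 ^ n) :=
  Prod.ext (sum_bval_div_eq_littleEndian t) (sum_bval_div_eq_bigEndian (digitXor t σ))

lemma sum_pi_snoc {α M : Type*} [Fintype α] [AddCommMonoid M] {n : ℕ}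
    (f : (Fin (n + 1) → α) → M) :
    ∑ t, f t = ∑ t : Fin n → α, ∑ u, f (Fin.snoc t u) := by
  rw [← (Fin.snocEquiv fun _ => α).sum_comp, Fintype.sum_prod_type_right]
  rfl

/-- The Heaviside function of `j - l`, with value `1 / 2` at `l = j`. -/
noncomputable def halfStep (l j : ℕ) : ℝ := if l < j then 1 else if l = j then 1 / 2 else 0

/-- Whether the point of the shifted Hammersley set in the row `bigEndian b` lies in one of the
columns up to `littleEndian a`, as a number `0` or `1`. -/
noncomputable def rowHit {n : ℕ} (σ a b : Fin n → Bool) : ℝ :=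
  if littleEndian (digitXor b σ) ≤ littleEndian a then 1 else 0

/-- The number of points of the shifted Hammersley set in the columns up to `littleEndian a` and the
rows up to `bigEndian b`, where a point in the row `bigEndian b` itself counts one half. -/
noncomputable def midCount {n : ℕ} (σ a b : Fin n → Bool) : ℝ :=
  ∑ t, if littleEndian t ≤ littleEndian a
    then halfStep (bigEndian (digitXor t σ)) (bigEndian b) else 0

/-- The mean over all `a` and `b` that is subtracted in `midDisc σ a b`; complementing `σ` changes
its sign. -/
noncomputable def drift {n : ℕ} (σ : Fin n → Bool) : ℝ := ∑ i, if σ i then -1 / 8 else 1 / 8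

/-- The abscissa of the right edge of the column `littleEndian a`. -/
noncomputable def rightEdge {n : ℕ} (a : Fin n → Bool) : ℝ := (littleEndian a + 1) / 2 ^ n

/-- The unnormalized discrepancy of the shifted Hammersley set in the box whose right side is
`rightEdge a` and whose top is the midline of the row `bigEndian b`, centred by subtracting its mean
over all `a` and `b`. -/
noncomputable def midDisc {n : ℕ} (σ a b : Fin n → Bool) : ℝ :=
  midCount σ a b - rightEdge a * (bigEndian b + 1 / 2) - drift σ

/-- The increment of `midDisc` when the digits `u`, `v` and the shift `s` are appended to `a`, `b`
and `σ`, up to sign; `sameParity` tells whether `v = u ⊕ s`, `e` stands for `rowHit σ a b` and `w`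
for `rightEdge a`. -/
noncomputable def stepSize (sameParity : Bool) (e w : ℝ) : ℝ :=
  if sameParity then (2 * w - 1) / 8 else (4 * e - 2 * w - 1) / 8

lemma sum_ite_bigEndian_lt {n : ℕ} (σ b : Fin n → Bool) :
    ∑ t, (if bigEndian (digitXor t σ) < bigEndian b then (1 : ℝ) else 0) = bigEndian b := by
  have := Equiv.sum_comp ((digitXor_involutive σ).toPerm.trans bigEndian)
    (fun k => if k < bigEndian b then (1 : ℝ) else 0)
  simp only [Equiv.trans_apply, Function.Involutive.coe_toPerm] at this
  refine this.trans ?_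
  simp [Finset.sum_boole, Finset.filter_gt_eq_Iio]

lemma sum_ite_bigEndian_eq {n : ℕ} (σ b : Fin n → Bool) (f : (Fin n → Bool) → ℝ) :
    ∑ t, (if bigEndian (digitXor t σ) = bigEndian b then f t else 0) = f (digitXor b σ) := by
  simp [(digitXor_involutive σ).eq_iff]

lemma rightEdge_snoc {n : ℕ} (a : Fin n → Bool) (u : Bool) :
    rightEdge (Fin.snoc a u : Fin (n + 1) → Bool) = (rightEdge a + bval u) / 2 := by
  simp only [rightEdge, littleEndian_snoc, bval_eq_toNat, pow_succ]
  push_cast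
  field_simp
  ring

lemma drift_snoc {n : ℕ} (σ : Fin n → Bool) (s : Bool) :
    drift (Fin.snoc σ s : Fin (n + 1) → Bool) = drift σ + if s then -1 / 8 else 1 / 8 := by
  simp [drift, Fin.sum_univ_castSucc]

lemma drift_compl {n : ℕ} (σ : Fin n → Bool) : drift σᶜ = -drift σ := by
  simp only [drift, ← Finset.sum_neg_distrib]
  refine Finset.sum_congr rfl fun i _ => ?_
  cases h : σ i <;> simp [h] <;> norm_num

lemma halfStep_eq (l j : ℕ) :
    halfStep l j = (if l < j then 1 else 0) + if l = j then 1 / 2 else 0 := by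
  grind [halfStep]

lemma halfStep_digit_of_ne {l j : ℕ} (h : l ≠ j) (s v : Bool) :
    halfStep (2 * l + s.toNat) (2 * j + v.toNat) = halfStep l j := by
  grind [halfStep, Bool.toNat_lt s, Bool.toNat_lt v]

lemma halfStep_digit_self (j : ℕ) (s v : Bool) :
    halfStep (2 * j + s.toNat) (2 * j + v.toNat) = halfStep s.toNat v.toNat := by
  simp [halfStep]

lemma littleEndian_snoc_le_snoc_iff {n : ℕ} (t a : Fin n → Bool) (r u : Bool) :
    (littleEndian (Fin.snoc t r : Fin (n + 1) → Bool) ≤ littleEndian (Fin.snoc a u)) ↔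
      r < u ∨ r = u ∧ littleEndian t ≤ littleEndian a := by
  have ht := (littleEndian t).isLt
  have ha := (littleEndian a).isLt
  rw [Fin.le_def, Fin.le_def, littleEndian_snoc, littleEndian_snoc]
  cases r <;> cases u <;> simp [Bool.lt_iff] <;> omega

/-- The part of `midCount` that the point of the row `bigEndian b` contributes after the digits `u`,
`v` and the shift `s` are appended to `a`, `b` and `σ`: that point splits into two, with last digits
`r = 0, 1`, and `e` stands for `rowHit σ a b`. -/
noncomputable def splitRowCount (s u v : Bool) (e : ℝ) : ℝ :=
  ∑ r : Bool, (if r < u then 1 else if r = u then e else 0) * halfStep (r != s).toNat v.toNat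

lemma sum_digit_midCount {n : ℕ} (σ a b t : Fin n → Bool) (s u v : Bool) :
    (∑ r : Bool, if littleEndian (Fin.snoc t r : Fin (n + 1) → Bool) ≤ littleEndian (Fin.snoc a u)
        then halfStep (bigEndian (Fin.snoc (digitXor t σ) (r != s) : Fin (n + 1) → Bool))
          (bigEndian (Fin.snoc b v : Fin (n + 1) → Bool)) else 0)
      = (if littleEndian t ≤ littleEndian a
          then halfStep (bigEndian (digitXor t σ)) (bigEndian b) else 0)
        + bval u * (if bigEndian (digitXor t σ) < bigEndian b then 1 else 0)
        + if bigEndian (digitXor t σ) = bigEndian b then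
            splitRowCount s u v (if littleEndian t ≤ littleEndian a then 1 else 0)
              - (if littleEndian t ≤ littleEndian a then 1 else 0) / 2
          else 0 := by
  simp only [littleEndian_snoc_le_snoc_iff, bigEndian_snoc, Fin.lt_def, Fin.ext_iff]
  by_cases hrow : (bigEndian (digitXor t σ) : ℕ) = bigEndian b
  · rw [hrow]
    simp only [halfStep_digit_self, splitRowCount, Fintype.sum_bool]
    by_cases hcol : littleEndian t ≤ littleEndian a <;> cases u <;>
      simp [hcol, halfStep, Bool.lt_iff]
  · simp only [halfStep_digit_of_ne hrow, hrow, if_false, add_zero, Fintype.sum_bool]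
    rw [halfStep_eq, if_neg hrow, add_zero]
    by_cases hcol : littleEndian t ≤ littleEndian a <;> cases u <;>
      simp [hcol, bval, Bool.lt_iff]

lemma midCount_snoc {n : ℕ} (σ a b : Fin n → Bool) (s u v : Bool) :
    midCount (Fin.snoc σ s : Fin (n + 1) → Bool) (Fin.snoc a u) (Fin.snoc b v)
      = midCount σ a b + bval u * bigEndian b
        + (splitRowCount s u v (rowHit σ a b) - rowHit σ a b / 2) := by
  rw [midCount, sum_pi_snoc]
  simp only [digitXor_snoc, sum_digit_midCount, Finset.sum_add_distrib, ← Finset.mul_sum,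
    sum_ite_bigEndian_lt]
  rw [sum_ite_bigEndian_eq σ b fun t =>
    splitRowCount s u v (if littleEndian t ≤ littleEndian a then 1 else 0)
      - (if littleEndian t ≤ littleEndian a then 1 else 0) / 2]
  rfl

lemma midDisc_snoc {n : ℕ} (σ a b : Fin n → Bool) (s u v : Bool) :
    midDisc (Fin.snoc σ s : Fin (n + 1) → Bool) (Fin.snoc a u) (Fin.snoc b v)
      = midDisc σ a b + (if u = s then 1 else -1) *
          stepSize (v == (u != s)) (rowHit σ a b) (rightEdge a) := by
  simp only [midDisc, midCount_snoc, rightEdge_snoc, drift_snoc, bigEndian_snoc]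
  push_cast
  cases s <;> cases u <;> cases v <;>
    simp [stepSize, splitRowCount, halfStep, bval, Bool.lt_iff] <;> ring

lemma rowHit_mem_Icc {n : ℕ} (σ a b : Fin n → Bool) : rowHit σ a b ∈ Set.Icc 0 1 := by
  unfold rowHit
  split_ifs <;> simp

lemma rightEdge_mem_Icc {n : ℕ} (a : Fin n → Bool) : rightEdge a ∈ Set.Icc 0 1 := by
  refine ⟨by unfold rightEdge; positivity, div_le_one_of_le₀ ?_ (by positivity)⟩
  exact_mod_cast (littleEndian a).isLt

lemma abs_stepSize_le {e w : ℝ} (he : e ∈ Set.Icc 0 1) (hw : w ∈ Set.Icc 0 1)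
    (sameParity : Bool) : |stepSize sameParity e w| ≤ 1 / 2 := by
  rw [abs_le]
  obtain ⟨he0, he1⟩ := he
  obtain ⟨hw0, hw1⟩ := hw
  unfold stepSize
  split_ifs <;> constructor <;> linarith

lemma cosh_mul_le_exp {x c : ℝ} (hx : |x| ≤ c) (l : ℝ) :
    Real.cosh (l * x) ≤ Real.exp ((l * c) ^ 2 / 2) := by
  refine (Real.cosh_le_exp_half_sq _).trans (Real.exp_le_exp.2 ?_)
  rw [mul_pow, mul_pow]
  have : x ^ 2 ≤ c ^ 2 := sq_le_sq.2 (hx.trans (le_abs_self c))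
  gcongr ?_ * ?_ / 2

-- For each parity the two choices of last digits take opposite steps, so the `sinh` terms of the
-- addition formula cancel.
lemma sum_cosh_midDisc_snoc {n : ℕ} (σ a b : Fin n → Bool) (s : Bool) (l : ℝ) :
    ∑ u, ∑ v, Real.cosh
        (l * midDisc (Fin.snoc σ s : Fin (n + 1) → Bool) (Fin.snoc a u) (Fin.snoc b v))
      = 2 * Real.cosh (l * midDisc σ a b) *
          ∑ z, Real.cosh (l * stepSize z (rowHit σ a b) (rightEdge a)) := by
  simp only [midDisc_snoc, mul_add, Real.cosh_add, Fintype.sum_bool]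
  cases s <;> simp <;> ring

lemma sum_cosh_midDisc_le {n : ℕ} (σ : Fin n → Bool) (l : ℝ) :
    ∑ a, ∑ b, Real.cosh (l * midDisc σ a b) ≤ 4 ^ n * Real.exp (n * l ^ 2 / 8) := by
  induction σ using Fin.snocInduction with
  | elim0 => simp [midDisc, midCount, drift, rightEdge, halfStep]
  | snoc σ s ih =>
    have sum_last_digits_le (a b) : ∑ u, ∑ v, Real.cosh
        (l * midDisc (Fin.snoc σ s : Fin (_ + 1) → Bool) (Fin.snoc a u) (Fin.snoc b v))
          ≤ 4 * Real.exp (l ^ 2 / 8) * Real.cosh (l * midDisc σ a b) := by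
      have hz (z) := cosh_mul_le_exp
        (abs_stepSize_le (rowHit_mem_Icc σ a b) (rightEdge_mem_Icc a) z) l
      rw [sum_cosh_midDisc_snoc, Fintype.sum_bool]
      grw [hz true, hz false]
      ring_nf
      rfl
    calc ∑ a, ∑ b, Real.cosh (l * midDisc (Fin.snoc σ s) a b)
        = ∑ a, ∑ b, ∑ u, ∑ v, Real.cosh (l * midDisc (Fin.snoc σ s) (Fin.snoc a u)
            (Fin.snoc b v)) := by
          simp only [sum_pi_snoc (α := Bool)]
          exact Finset.sum_congr rfl fun a _ => Finset.sum_comm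
      _ ≤ ∑ a, ∑ b, 4 * Real.exp (l ^ 2 / 8) * Real.cosh (l * midDisc σ a b) := by
          gcongr with a _ b _
          exact sum_last_digits_le a b
      _ ≤ 4 * Real.exp (l ^ 2 / 8) * (4 ^ _ * Real.exp (_ * l ^ 2 / 8)) := by
          simp only [← Finset.mul_sum]
          gcongr
      _ = _ := by
          push_cast
          rw [add_mul, add_div, Real.exp_add]
          ring_nf

lemma sum_ite_row_eq_rowHit {n : ℕ} (σ a b : Fin n → Bool) (c : ℝ) :
    ∑ t, (if bigEndian (digitXor t σ) = bigEndian b then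
        (if littleEndian t ≤ littleEndian a then c else 0) else 0) = c * rowHit σ a b := by
  rw [sum_ite_bigEndian_eq σ b fun t => if littleEndian t ≤ littleEndian a then c else 0, rowHit,
    mul_ite, mul_one, mul_zero]

lemma card_bigEndian_le {n : ℕ} (σ a b : Fin n → Bool) :
    ((Finset.univ.filter fun t => littleEndian t ≤ littleEndian a ∧
        bigEndian (digitXor t σ) ≤ bigEndian b).card : ℝ)
      = midCount σ a b + 1 / 2 * rowHit σ a b := by
  rw [midCount, ← sum_ite_row_eq_rowHit, ← Finset.sum_add_distrib, Finset.natCast_card_filter]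
  refine Finset.sum_congr rfl fun t _ => ?_
  grind [halfStep]

lemma card_bigEndian_lt {n : ℕ} (σ a b : Fin n → Bool) :
    ((Finset.univ.filter fun t => littleEndian t ≤ littleEndian a ∧
        bigEndian (digitXor t σ) < bigEndian b).card : ℝ)
      = midCount σ a b - 1 / 2 * rowHit σ a b := by
  rw [midCount, ← sum_ite_row_eq_rowHit, ← Finset.sum_sub_distrib, Finset.natCast_card_filter]
  refine Finset.sum_congr rfl fun t _ => ?_
  grind [halfStep]

/-- The `k`-th dyadic interval of length `2⁻ⁿ`, closed on the right since `countIn` counts the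
points strictly below and to the left of the corner. -/
def dyadicIoc (n k : ℕ) : Set ℝ := Set.Ioc ((k : ℝ) / 2 ^ n) ((k + 1 : ℝ) / 2 ^ n)

/-- The dyadic square in the column `littleEndian a` and the row `bigEndian b`. -/
def dyadicCell {n : ℕ} (a b : Fin n → Bool) : Set (ℝ × ℝ) :=
  dyadicIoc n (littleEndian a) ×ˢ dyadicIoc n (bigEndian b)

lemma div_two_pow_lt_iff_of_mem_dyadicIoc {n k : ℕ} {x : ℝ} (hx : x ∈ dyadicIoc n k) (m : ℕ) :
    (m : ℝ) / 2 ^ n < x ↔ m ≤ k := by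
  obtain ⟨hlo, hhi⟩ := hx
  constructor
  · intro h
    have : (m : ℝ) < k + 1 := (div_lt_div_iff_of_pos_right (by positivity)).1 (h.trans_le hhi)
    exact Nat.lt_succ_iff.1 (by exact_mod_cast this)
  · intro h
    refine lt_of_le_of_lt ?_ hlo
    gcongr

lemma countIn_bool_prod {ι : Type*} [Fintype ι] (P : Bool × ι → ℝ × ℝ) (t : ℝ × ℝ) :
    countIn P t = countIn (fun k => P (true, k)) t + countIn (fun k => P (false, k)) t := by
  simp only [countIn, Finset.card_filter, Fintype.sum_prod_type, Fintype.sum_bool]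

lemma countIn_hammersleyShifted {n : ℕ} (σ : Fin n → Bool) {a b : Fin n → Bool} {t : ℝ × ℝ}
    (ht : t ∈ dyadicCell a b) :
    (countIn (hammersleyShifted n σ) t : ℝ) = midCount σ a b + 1 / 2 * rowHit σ a b := by
  rw [← card_bigEndian_le, countIn]
  congr! 3 with k
  have hx : 0 ≤ (littleEndian k : ℝ) / 2 ^ n := by positivity
  have hy : 0 ≤ (bigEndian (digitXor k σ) : ℝ) / 2 ^ n := by positivity
  simp only [hammersleyShifted_eq, hx, hy, true_and, Fin.le_def,
    div_two_pow_lt_iff_of_mem_dyadicIoc ht.1, div_two_pow_lt_iff_of_mem_dyadicIoc ht.2]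

lemma one_sub_hammersleyShifted_snd {n : ℕ} (σ t : Fin n → Bool) :
    1 - (hammersleyShifted n σ t).2 = ((bigEndian (digitXor t σᶜ) + 1 : ℕ) : ℝ) / 2 ^ n := by
  have h : (bigEndian (digitXor t σ) : ℝ) + bigEndian (digitXor t σᶜ) + 1 = 2 ^ n := by
    rw [digitXor_compl]
    exact_mod_cast bigEndian_add_bigEndian_compl (digitXor t σ)
  rw [hammersleyShifted_eq, eq_div_iff (by positivity), sub_mul, div_mul_cancel₀ _ (by positivity)]
  push_cast
  linarith

lemma countIn_reflected_hammersleyShifted {n : ℕ} (σ : Fin n → Bool) {a b : Fin n → Bool}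
    {t : ℝ × ℝ} (ht : t ∈ dyadicCell a b) :
    (countIn (fun k => ((hammersleyShifted n σ k).1, 1 - (hammersleyShifted n σ k).2)) t : ℝ)
      = midCount σᶜ a b - 1 / 2 * rowHit σᶜ a b := by
  rw [← card_bigEndian_lt, countIn]
  congr! 3 with k
  simp only [one_sub_hammersleyShifted_snd]
  have hx : 0 ≤ (littleEndian k : ℝ) / 2 ^ n := by positivity
  have hy : 0 ≤ ((bigEndian (digitXor k σᶜ) + 1 : ℕ) : ℝ) / 2 ^ n := by positivity
  simp only [hammersleyShifted_eq, hx, hy, true_and, Fin.le_def, Fin.lt_def, Nat.add_one_le_iff,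
    div_two_pow_lt_iff_of_mem_dyadicIoc ht.1, div_two_pow_lt_iff_of_mem_dyadicIoc ht.2]

lemma two_pow_mul_localDisc_hammersleySymTilde {n : ℕ} (σ : Fin n → Bool)
    {a b : Fin n → Bool} {t : ℝ × ℝ} (ht : t ∈ dyadicCell a b) :
    2 ^ (n + 1) * localDisc (hammersleySymTilde n σ) t
      = midDisc σ a b + midDisc σᶜ a b + (rowHit σ a b - rowHit σᶜ a b) / 2
        + 2 * (rightEdge a * (bigEndian b + 1 / 2) - 2 ^ n * (t.1 * t.2)) := by
  have hcount : (countIn (hammersleySymTilde n σ) t : ℝ)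
      = midCount σᶜ a b - 1 / 2 * rowHit σᶜ a b + (midCount σ a b + 1 / 2 * rowHit σ a b) := by
    rw [countIn_bool_prod, Nat.cast_add, ← countIn_hammersleyShifted σ ht,
      ← countIn_reflected_hammersleyShifted σ ht]
    rfl
  have hcard : (Fintype.card (Bool × (Fin n → Bool)) : ℝ) = 2 ^ (n + 1) := by
    simp [pow_succ']
  rw [localDisc, mul_sub, hcard, mul_div_cancel₀ _ (by positivity), hcount, midDisc, midDisc,
    drift_compl]
  ring

lemma rightEdge_mul_sub_mem_Icc {n : ℕ} {a b : Fin n → Bool} {t : ℝ × ℝ}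
    (ht : t ∈ dyadicCell a b) :
    rightEdge a * (bigEndian b + 1 / 2) - 2 ^ n * (t.1 * t.2) ∈ Set.Icc (-1 / 2) (3 / 2) := by
  obtain ⟨⟨hxlo, hxhi⟩, hylo, hyhi⟩ := ht
  obtain ⟨hw0, hw1⟩ := rightEdge_mem_Icc a
  have hb : (bigEndian b : ℝ) + 1 ≤ 2 ^ n := by exact_mod_cast (bigEndian b).isLt
  change t.1 ≤ rightEdge a at hxhi
  rw [div_lt_iff₀ (by positivity)] at hylo
  rw [le_div_iff₀ (by positivity)] at hyhi
  have hy0 : 0 ≤ t.2 * 2 ^ n := le_trans (by positivity) hylo.le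
  have hx0 : 0 ≤ t.1 := le_trans (by positivity) hxlo.le
  have hwidth : (rightEdge a - t.1) * 2 ^ n ≤ 1 := by
    rw [div_lt_iff₀ (by positivity)] at hxlo
    rw [rightEdge, sub_mul, div_mul_cancel₀ _ (by positivity)]
    linarith
  have hupper : 2 ^ n * (t.1 * t.2) ≤ rightEdge a * (bigEndian b + 1) := by
    calc 2 ^ n * (t.1 * t.2) = t.1 * (t.2 * 2 ^ n) := by ring
      _ ≤ rightEdge a * (bigEndian b + 1) := by gcongr
  have hlower : rightEdge a * bigEndian b - 1 ≤ 2 ^ n * (t.1 * t.2) := by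
    calc rightEdge a * bigEndian b - 1
        = t.1 * bigEndian b + (rightEdge a - t.1) * bigEndian b - 1 := by ring
      _ ≤ t.1 * (t.2 * 2 ^ n) + (rightEdge a - t.1) * 2 ^ n - 1 := by
        gcongr; linarith
      _ ≤ 2 ^ n * (t.1 * t.2) := by linarith
  constructor <;> linarith

lemma abs_localDisc_sub_midDisc_le {n : ℕ} (σ : Fin n → Bool) {a b : Fin n → Bool} {t : ℝ × ℝ}
    (ht : t ∈ dyadicCell a b) :
    |2 ^ (n + 1) * localDisc (hammersleySymTilde n σ) t - (midDisc σ a b + midDisc σᶜ a b)|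
      ≤ 4 := by
  obtain ⟨hlo, hhi⟩ := rightEdge_mul_sub_mem_Icc ht
  obtain ⟨he0, he1⟩ := rowHit_mem_Icc σ a b
  obtain ⟨hf0, hf1⟩ := rowHit_mem_Icc σᶜ a b
  rw [two_pow_mul_localDisc_hammersleySymTilde σ ht, abs_le]
  constructor <;> linarith

lemma exp_add_le_cosh_add_cosh (x y : ℝ) :
    Real.exp (x + y) ≤ Real.cosh (2 * x) + Real.cosh (2 * y) := by
  have hsq (z : ℝ) : Real.exp (2 * z) = Real.exp z ^ 2 := by rw [two_mul, Real.exp_add, sq]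
  rw [Real.exp_add, Real.cosh_eq, Real.cosh_eq, hsq, hsq]
  linarith [two_mul_le_add_sq (Real.exp x) (Real.exp y), Real.exp_pos (-(2 * x)),
    Real.exp_pos (-(2 * y))]

lemma exp_mul_abs_localDisc_le {n : ℕ} (σ : Fin n → Bool) {a b : Fin n → Bool} {t : ℝ × ℝ}
    (ht : t ∈ dyadicCell a b) {l : ℝ} (hl : 0 ≤ l) :
    Real.exp (l * 2 ^ (n + 1) * |localDisc (hammersleySymTilde n σ) t|)
      ≤ Real.exp (4 * l) *
        (Real.cosh (2 * l * midDisc σ a b) + Real.cosh (2 * l * midDisc σᶜ a b)) := by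
  set D := 2 ^ (n + 1) * localDisc (hammersleySymTilde n σ) t with hD
  have hDabs : 2 ^ (n + 1) * |localDisc (hammersleySymTilde n σ) t| = |D| := by
    rw [hD, abs_mul, abs_of_pos (by positivity : (0 : ℝ) < 2 ^ (n + 1))]
  have htri : |D| ≤ 4 + (|midDisc σ a b| + |midDisc σᶜ a b|) := by
    have := abs_sub_abs_le_abs_sub D (midDisc σ a b + midDisc σᶜ a b)
    linarith [abs_localDisc_sub_midDisc_le σ ht, abs_add_le (midDisc σ a b) (midDisc σᶜ a b)]
  have hcosh (x : ℝ) : Real.cosh (2 * (l * |x|)) = Real.cosh (2 * l * x) := by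
    rw [← Real.cosh_abs (2 * l * x), abs_mul, abs_of_nonneg (by positivity : 0 ≤ 2 * l), mul_assoc]
  calc Real.exp (l * 2 ^ (n + 1) * |localDisc (hammersleySymTilde n σ) t|)
      ≤ Real.exp (4 * l + (l * |midDisc σ a b| + l * |midDisc σᶜ a b|)) := by
        rw [mul_assoc, hDabs, ← mul_add, mul_comm 4, ← mul_add]
        gcongr
    _ ≤ _ := by
        rw [Real.exp_add, ← hcosh, ← hcosh]
        gcongr
        exact exp_add_le_cosh_add_cosh _ _

lemma setIntegral_iUnion_le_sum {α ι : Type*} [MeasurableSpace α] [Fintype ι] {μ : Measure α}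
    {cells : ι → Set α} (hmeas : ∀ i, MeasurableSet (cells i)) (hfin : ∀ i, μ (cells i) ≠ ⊤)
    {f : α → ℝ} (hf : ∀ x, 0 ≤ f x) {M : ι → ℝ} (hM : ∀ i, ∀ x ∈ cells i, f x ≤ M i) :
    ∫ x in ⋃ i, cells i, f x ∂μ ≤ ∑ i, μ.real (cells i) * M i := by
  have hind (i : ι) (x : α) : 0 ≤ (cells i).indicator (fun _ => M i) x :=
    Set.indicator_nonneg (fun x hx => (hf x).trans (hM i x hx)) x
  have hint (i : ι) : Integrable ((cells i).indicator fun _ => M i) μ :=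
    (integrable_indicator_iff (hmeas i)).2 (integrableOn_const (hfin i))
  have hle : ∀ x ∈ ⋃ i, cells i, f x ≤ ∑ i, (cells i).indicator (fun _ => M i) x := by
    intro x hx
    obtain ⟨i, hi⟩ := Set.mem_iUnion.1 hx
    calc f x ≤ (cells i).indicator (fun _ => M i) x := by
          rw [Set.indicator_of_mem hi]; exact hM i x hi
      _ ≤ _ := Finset.single_le_sum (fun j _ => hind j x) (Finset.mem_univ i)
  calc ∫ x in ⋃ i, cells i, f x ∂μ
      ≤ ∫ x in ⋃ i, cells i, ∑ i, (cells i).indicator (fun _ => M i) x ∂μ :=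
        integral_mono_of_nonneg (ae_of_all _ hf)
          (integrable_finsetSum _ fun i _ => (hint i).restrict)
          ((ae_restrict_mem (MeasurableSet.iUnion hmeas)).mono hle)
    _ ≤ ∫ x, ∑ i, (cells i).indicator (fun _ => M i) x ∂μ :=
        setIntegral_le_integral (integrable_finsetSum _ fun i _ => hint i)
          (ae_of_all _ fun x => Finset.sum_nonneg fun i _ => hind i x)
    _ = ∑ i, μ.real (cells i) * M i := by
        rw [integral_finsetSum _ fun i _ => hint i]
        refine Finset.sum_congr rfl fun i _ => ?_
        rw [integral_indicator_const _ (hmeas i), smul_eq_mul]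

lemma iUnion_dyadicIoc (n : ℕ) : ⋃ k : Fin (2 ^ n), dyadicIoc n k = Set.Ioc 0 1 := by
  have hmono : Monotone fun k : ℕ => (k : ℝ) / 2 ^ n := fun i j hij => by dsimp only; gcongr
  have := hmono.biUnion_Ico_Ioc_map_succ 0 (2 ^ n)
  simp only [Nat.cast_zero, zero_div, Nat.cast_pow, Nat.cast_ofNat, Order.succ_eq_add_one,
    Nat.cast_add, Nat.cast_one, div_self (by positivity : (2 : ℝ) ^ n ≠ 0)] at this
  rw [← this]
  ext x
  simp only [dyadicIoc, Set.mem_iUnion, Set.mem_Ico, Nat.zero_le, true_and, exists_prop,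
    Fin.exists_iff]

lemma iUnion_dyadicCell (n : ℕ) :
    ⋃ ab : (Fin n → Bool) × (Fin n → Bool), dyadicCell ab.1 ab.2
      = Set.Ioc (0 : ℝ) 1 ×ˢ Set.Ioc (0 : ℝ) 1 := by
  simp only [dyadicCell]
  rw [Set.iUnion_prod (fun a => dyadicIoc n (littleEndian a)) fun b => dyadicIoc n (bigEndian b),
    littleEndian.surjective.iUnion_comp fun k => dyadicIoc n k,
    bigEndian.surjective.iUnion_comp fun k => dyadicIoc n k, iUnion_dyadicIoc]

lemma measurableSet_dyadicCell {n : ℕ} (a b : Fin n → Bool) : MeasurableSet (dyadicCell a b) :=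
  measurableSet_Ioc.prod measurableSet_Ioc

lemma volume_dyadicCell {n : ℕ} (a b : Fin n → Bool) :
    volume (dyadicCell a b) = ENNReal.ofReal (1 / 4 ^ n) := by
  have hlen (k : ℕ) : ((k + 1 : ℝ) / 2 ^ n) - k / 2 ^ n = 1 / 2 ^ n := by ring
  have hsq : (1 : ℝ) / 2 ^ n * (1 / 2 ^ n) = 1 / 4 ^ n := by
    rw [div_mul_div_comm, one_mul, ← mul_pow]
    norm_num
  rw [dyadicCell, dyadicIoc, dyadicIoc, Measure.volume_eq_prod, Measure.prod_prod,
    Real.volume_Ioc, Real.volume_Ioc, hlen, hlen, ← ENNReal.ofReal_mul (by positivity), hsq]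

lemma setIntegral_unitSquare_le {n : ℕ} {f : ℝ × ℝ → ℝ} (hf : ∀ t, 0 ≤ f t)
    {M : (Fin n → Bool) → (Fin n → Bool) → ℝ}
    (hM : ∀ a b, ∀ t ∈ dyadicCell a b, f t ≤ M a b) :
    ∫ t in Set.Icc (0 : ℝ × ℝ) 1, f t ≤ (∑ a, ∑ b, M a b) / 4 ^ n := by
  have hae : Set.Icc (0 : ℝ × ℝ) 1 =ᵐ[volume]
      ⋃ ab : (Fin n → Bool) × (Fin n → Bool), dyadicCell ab.1 ab.2 := by
    rw [iUnion_dyadicCell, Prod.zero_eq_mk, Prod.one_eq_mk, ← Set.Icc_prod_Icc]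
    exact (Measure.set_prod_ae_eq Ioc_ae_eq_Icc Ioc_ae_eq_Icc).symm
  have hfin (ab : (Fin n → Bool) × (Fin n → Bool)) : volume (dyadicCell ab.1 ab.2) ≠ ⊤ :=
    volume_dyadicCell ab.1 ab.2 ▸ ENNReal.ofReal_ne_top
  rw [setIntegral_congr_set hae]
  calc ∫ t in ⋃ ab : (Fin n → Bool) × (Fin n → Bool), dyadicCell ab.1 ab.2, f t
      ≤ ∑ ab : (Fin n → Bool) × (Fin n → Bool),
          volume.real (dyadicCell ab.1 ab.2) * M ab.1 ab.2 :=
        setIntegral_iUnion_le_sum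
          (cells := fun ab : (Fin n → Bool) × (Fin n → Bool) => dyadicCell ab.1 ab.2)
          (fun ab => measurableSet_dyadicCell ab.1 ab.2) hfin hf fun ab => hM ab.1 ab.2
    _ = (∑ a, ∑ b, M a b) / 4 ^ n := by
        simp_rw [measureReal_def, volume_dyadicCell, ENNReal.toReal_ofReal (by positivity :
          (0 : ℝ) ≤ 1 / 4 ^ n), ← Finset.mul_sum, Fintype.sum_prod_type, one_div_mul_eq_div]

lemma setIntegral_abs_localDisc_rpow_le {n : ℕ} (σ : Fin n → Bool) {p l : ℝ} (hp : 0 < p)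
    (hl : 0 < l) :
    ∫ t in Set.Icc (0 : ℝ × ℝ) 1, |localDisc (hammersleySymTilde n σ) t| ^ p
      ≤ (p / (l * 2 ^ (n + 1))) ^ p * (2 * Real.exp (4 * l + n * l ^ 2 / 2)) := by
  set c : ℝ := (p / (l * 2 ^ (n + 1))) ^ p with hc
  have hc0 : 0 ≤ c := by positivity
  have hscale : 0 < l * 2 ^ (n + 1) := by positivity
  have hcell (a b : Fin n → Bool) (t : ℝ × ℝ) (ht : t ∈ dyadicCell a b) :
      |localDisc (hammersleySymTilde n σ) t| ^ p
        ≤ c * Real.exp (4 * l) *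
          (Real.cosh (2 * l * midDisc σ a b) + Real.cosh (2 * l * midDisc σᶜ a b)) := by
    have h := ProbabilityTheory.rpow_abs_le_mul_exp_abs
      (localDisc (hammersleySymTilde n σ) t) hp.le hscale.ne'
    rw [abs_of_pos hscale, ← hc] at h
    refine h.trans ?_
    rw [mul_assoc c]
    exact mul_le_mul_of_nonneg_left (exp_mul_abs_localDisc_le σ ht hl.le) hc0
  have hsum (τ : Fin n → Bool) : (∑ a, ∑ b, Real.cosh (2 * l * midDisc τ a b))
      ≤ 4 ^ n * Real.exp (n * l ^ 2 / 2) := by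
    convert sum_cosh_midDisc_le τ (2 * l) using 3
    ring
  calc ∫ t in Set.Icc (0 : ℝ × ℝ) 1, |localDisc (hammersleySymTilde n σ) t| ^ p
      ≤ (∑ a, ∑ b, c * Real.exp (4 * l) * (Real.cosh (2 * l * midDisc σ a b)
          + Real.cosh (2 * l * midDisc σᶜ a b))) / 4 ^ n :=
        setIntegral_unitSquare_le (fun t => by positivity) hcell
    _ ≤ c * Real.exp (4 * l) *
          (4 ^ n * Real.exp (n * l ^ 2 / 2) + 4 ^ n * Real.exp (n * l ^ 2 / 2)) / 4 ^ n := by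
        simp only [← Finset.mul_sum, Finset.sum_add_distrib]
        gcongr
        · exact hsum σ
        · exact hsum σᶜ
    _ = c * (2 * Real.exp (4 * l + n * l ^ 2 / 2)) := by
        rw [Real.exp_add]
        field_simp
        ring

lemma LpDisc_hammersleySymTilde_le {n : ℕ} (σ : Fin n → Bool) {p : ℝ} (hp : 0 < p) :
    LpDisc p (hammersleySymTilde n σ)
      ≤ p * (2 * Real.exp 5) ^ (1 / p) * √(n + 1) / 2 ^ (n + 1) := by
  set l : ℝ := 1 / √(n + 1)
  have hl : 0 < l := by positivity
  have hexponent : 4 * l + n * l ^ 2 / 2 ≤ 5 := by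
    have hl1 : l ≤ 1 := by
      rw [div_le_one (by positivity), Real.one_le_sqrt]
      simp
    have hnl : n * l ^ 2 ≤ 1 := by
      rw [div_pow, one_pow, Real.sq_sqrt (by positivity), mul_one_div, div_le_one (by positivity)]
      linarith
    linarith
  rw [LpDisc]
  calc (∫ t in Set.Icc (0 : ℝ × ℝ) 1, |localDisc (hammersleySymTilde n σ) t| ^ p) ^ (1 / p)
      ≤ ((p / (l * 2 ^ (n + 1))) ^ p * (2 * Real.exp (4 * l + n * l ^ 2 / 2))) ^ (1 / p) := by
        gcongr
        exact setIntegral_abs_localDisc_rpow_le σ hp hl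
    _ ≤ ((p / (l * 2 ^ (n + 1))) ^ p * (2 * Real.exp 5)) ^ (1 / p) := by gcongr
    _ = p / (l * 2 ^ (n + 1)) * (2 * Real.exp 5) ^ (1 / p) := by
        rw [Real.mul_rpow (by positivity) (by positivity), one_div,
          Real.rpow_rpow_inv (by positivity) hp.ne']
    _ = p * (2 * Real.exp 5) ^ (1 / p) * √(n + 1) / 2 ^ (n + 1) := by
        simp only [l]
        field_simp

theorem statement3_general (p : ℝ) (hp : 0 < p) :
    ∃ C : ℝ, 0 < C ∧ ∀ (n : ℕ) (σ : Fin n → Bool),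
      LpDisc p (hammersleySymTilde n σ) ≤
        C * Real.sqrt (Real.log ((2 : ℝ) ^ (n + 1))) / 2 ^ (n + 1) := by
  have hlog : 0 < √(Real.log 2) := Real.sqrt_pos.2 (Real.log_pos one_lt_two)
  refine ⟨p * (2 * Real.exp 5) ^ (1 / p) / √(Real.log 2), div_pos (by positivity) hlog,
    fun n σ => ?_⟩
  have hsqrt : √(Real.log ((2 : ℝ) ^ (n + 1))) = √(n + 1) * √(Real.log 2) := by
    rw [Real.log_pow, Nat.cast_add_one, Real.sqrt_mul (by positivity)]
  calc LpDisc p (hammersleySymTilde n σ)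
      ≤ p * (2 * Real.exp 5) ^ (1 / p) * √(n + 1) / 2 ^ (n + 1) :=
        LpDisc_hammersleySymTilde_le σ hp
    _ = _ := by
        rw [hsqrt]
        field_simp

/-- The multiset `~R_{n,σ}^{sym}` (with `N = 2^(n+1)` points counted with multiplicity)
has optimal `L_p`-discrepancy `≪ √(log N)/N`, independently of the shift `σ`. -/
theorem statement3 (p : ℝ) (hp : 1 < p) :
    ∃ C : ℝ, 0 < C ∧ ∀ n : ℕ, 0 < n → ∀ σ : Fin n → Bool,
      LpDisc p (hammersleySymTilde n σ) ≤
        C * Real.sqrt (Real.log ((2 : ℝ) ^ (n + 1))) / 2 ^ (n + 1) := by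
  obtain ⟨C, hC, hbound⟩ := statement3_general p (zero_lt_one.trans hp)
  exact ⟨C, hC, fun n _ => hbound n⟩
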